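/- Let r ∈ (1,∞), r̂ := min(r,2), μ > 0, δ ≥ 0 and a > 0, with δ + α > 0 for the values of α considered. Define f : (0,∞) → ℝ by f(α) := α·μ·(δ^a + α^a)^((r−2)/a). Then f is differentiable on (0,∞) with f′(α) = μ·(δ^a + α^a)^((r−2)/a − 1)·(δ^a + (r−1)·α^a), and for every α > 0: μ·(r̂−1)·(δ^a + α^a)^((r−2)/a) ≤ f′(α) ≤ μ·(r + 1 − r̂)·(δ^a + α^a)^((r−2)/a). -/

import Mathlib

open Real

/-! Writing `S = δ ^ a + α ^ a`, the derivative divided by `μ * S ^ ((r - 2) / a)` is the weighted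
mean of `1` and `r - 1` with weights `δ ^ a / S` and `α ^ a / S`, hence it lies between
`min 1 (r - 1) = r̂ - 1` and `max 1 (r - 1) = r + 1 - r̂`. -/

section WeightedSum

variable {R : Type*} [Semiring R] [LinearOrder R] [IsOrderedRing R] {x y u v : R}

theorem min_mul_add_le_mul_add_mul (hu : 0 ≤ u) (hv : 0 ≤ v) :
    min x y * (u + v) ≤ x * u + y * v := by
  rw [mul_add]
  gcongr
  exacts [min_le_left x y, min_le_right x y]

theorem mul_add_mul_le_max_mul_add (hu : 0 ≤ u) (hv : 0 ≤ v) :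
    x * u + y * v ≤ max x y * (u + v) := by
  rw [mul_add]
  gcongr
  exacts [le_max_left x y, le_max_right x y]

end WeightedSum

theorem min_sub_one_eq_min_one_sub_one (r : ℝ) : min r 2 - 1 = min 1 (r - 1) := by
  rw [← min_sub_sub_right, min_comm]
  norm_num

theorem add_one_sub_min_eq_max_one_sub_one (r : ℝ) : r + 1 - min r 2 = max 1 (r - 1) := by
  have h_sum : min 1 (r - 1) + max 1 (r - 1) = 1 + (r - 1) := min_add_max 1 (r - 1)
  linarith [min_sub_one_eq_min_one_sub_one r]

section AddRpow

variable {c x : ℝ}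

theorem min_one_mul_add_rpow_le (hc : 0 ≤ c) (hx : 0 ≤ x) (h_add : c + x ≠ 0) (k s : ℝ) :
    min 1 k * (c + x) ^ s ≤ (c + x) ^ (s - 1) * (c + k * x) :=
  calc
    min 1 k * (c + x) ^ s = (c + x) ^ (s - 1) * (min 1 k * (c + x)) := by
      rw [mul_left_comm, ← rpow_add_one h_add, sub_add_cancel]
    _ ≤ (c + x) ^ (s - 1) * (1 * c + k * x) := by
      gcongr
      exact min_mul_add_le_mul_add_mul hc hx
    _ = (c + x) ^ (s - 1) * (c + k * x) := by rw [one_mul]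

theorem add_rpow_mul_le_max_one_mul (hc : 0 ≤ c) (hx : 0 ≤ x) (h_add : c + x ≠ 0) (k s : ℝ) :
    (c + x) ^ (s - 1) * (c + k * x) ≤ max 1 k * (c + x) ^ s :=
  calc
    (c + x) ^ (s - 1) * (c + k * x) = (c + x) ^ (s - 1) * (1 * c + k * x) := by rw [one_mul]
    _ ≤ (c + x) ^ (s - 1) * (max 1 k * (c + x)) := by
      gcongr
      exact mul_add_mul_le_max_mul_add hc hx
    _ = max 1 k * (c + x) ^ s := by
      rw [mul_left_comm, ← rpow_add_one h_add, sub_add_cancel]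

theorem hasDerivAt_mul_add_rpow_rpow {a : ℝ} (hx : x ≠ 0) (h_add : c + x ^ a ≠ 0) (s : ℝ) :
    HasDerivAt (fun t : ℝ => t * (c + t ^ a) ^ s)
      ((c + x ^ a) ^ (s - 1) * (c + (1 + a * s) * x ^ a)) x := by
  have h_base : HasDerivAt (fun t : ℝ => c + t ^ a) (a * x ^ (a - 1)) x :=
    (hasDerivAt_rpow_const (Or.inl hx)).const_add c
  have h_prod := (hasDerivAt_id' x).mul (h_base.rpow_const (p := s) (Or.inl h_add))
  refine h_prod.congr_deriv ?_
  have h_factor : (c + x ^ a) ^ s = (c + x ^ a) ^ (s - 1) * (c + x ^ a) := by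
    rw [← rpow_add_one h_add, sub_add_cancel]
  have h_pow : x ^ (a - 1) * x = x ^ a := by rw [← rpow_add_one hx, sub_add_cancel]
  rw [h_factor, ← h_pow]
  ring

end AddRpow

theorem stmt6_general (r : ℝ) {μ c a α : ℝ} (hμ : 0 ≤ μ) (hc : 0 ≤ c) (ha : a ≠ 0)
    (hα : 0 < α) :
    HasDerivAt (fun t : ℝ => t * μ * (c + t ^ a) ^ ((r - 2) / a))
      (μ * (c + α ^ a) ^ ((r - 2) / a - 1) * (c + (r - 1) * α ^ a)) α ∧
    μ * (min r 2 - 1) * (c + α ^ a) ^ ((r - 2) / a) ≤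
      μ * (c + α ^ a) ^ ((r - 2) / a - 1) * (c + (r - 1) * α ^ a) ∧
    μ * (c + α ^ a) ^ ((r - 2) / a - 1) * (c + (r - 1) * α ^ a) ≤
      μ * (r + 1 - min r 2) * (c + α ^ a) ^ ((r - 2) / a) := by
  have h_pow : 0 < α ^ a := rpow_pos_of_pos hα a
  have h_add : c + α ^ a ≠ 0 := (add_pos_of_nonneg_of_pos hc h_pow).ne'
  have h_coeff : 1 + a * ((r - 2) / a) = r - 1 := by
    rw [mul_div_cancel₀ _ ha]
    ring
  rw [min_sub_one_eq_min_one_sub_one, add_one_sub_min_eq_max_one_sub_one]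
  simp only [mul_assoc μ]
  refine ⟨?_, ?_, ?_⟩
  · have h_deriv := (hasDerivAt_mul_add_rpow_rpow hα.ne' h_add ((r - 2) / a)).const_mul μ
    simpa only [h_coeff, mul_left_comm μ, mul_assoc] using h_deriv
  · exact mul_le_mul_of_nonneg_left (min_one_mul_add_rpow_le hc h_pow.le h_add _ _) hμ
  · exact mul_le_mul_of_nonneg_left (add_rpow_mul_le_max_one_mul hc h_pow.le h_add _ _) hμ

/-- Derivative computation and two-sided bound (Corollary A.2) for the radial
profile `f(α) = α μ (δ^a + α^a)^((r-2)/a)` of the `(μ,δ,a,r)`-Carreau–Yasuda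
law: `f'(α) = μ (δ^a + α^a)^((r-2)/a - 1) (δ^a + (r-1) α^a)` and
`μ (r̂-1) (δ^a + α^a)^((r-2)/a) ≤ f'(α) ≤ μ (r+1-r̂) (δ^a + α^a)^((r-2)/a)`,
where `r̂ = min r 2`. -/
theorem stmt6 (r : ℝ) (hr : 1 < r) (μ δ a : ℝ) (hμ : 0 < μ) (hδ : 0 ≤ δ) (ha : 0 < a) :
    ∀ α : ℝ, 0 < α →
      HasDerivAt (fun t : ℝ => t * μ * (δ ^ a + t ^ a) ^ ((r - 2) / a))
        (μ * (δ ^ a + α ^ a) ^ ((r - 2) / a - 1) * (δ ^ a + (r - 1) * α ^ a)) α ∧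
      μ * (min r 2 - 1) * (δ ^ a + α ^ a) ^ ((r - 2) / a) ≤
        μ * (δ ^ a + α ^ a) ^ ((r - 2) / a - 1) * (δ ^ a + (r - 1) * α ^ a) ∧
      μ * (δ ^ a + α ^ a) ^ ((r - 2) / a - 1) * (δ ^ a + (r - 1) * α ^ a) ≤
        μ * (r + 1 - min r 2) * (δ ^ a + α ^ a) ^ ((r - 2) / a) :=
  fun _ hα ↦ stmt6_general r hμ.le (rpow_nonneg hδ a) ha.ne' hα
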